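/- (Linear convergence of APMD with halving perturbation.) Let l = ⌈log_γ(1/4)⌉ and let (π_k) be APMD iterates with π_0 the uniform policy, τ_k = 2^{−(⌊k/l⌋+1)}, and stepsizes η_k with 1 + η_k τ_k = 1/γ, where π_{k+1}(·|s) = argmin_{p∈Δ_A}{ η_k[⟨Q_{τ_k}^{π_k}(s,·), p⟩ + h^p(s) + τ_k D_{π_0}^p(s)] + D_{π_k}^p(s) } for each s. Then for every k ≥ 0: f(π_k) − f(π*) ≤ 2^{−⌊k/l⌋} [ f(π_0) − f(π*) + 2 log|A| / (1−γ) ]. -/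

import Mathlib

open Finset

noncomputable section

namespace RL

/-- The probability simplex on a finite set `A`. -/
def simplex (A : Type*) [Fintype A] : Set (A → ℝ) :=
  {p | (∀ a, 0 ≤ p a) ∧ ∑ a, p a = 1}

/-- A policy assigns to each state a distribution over actions. -/
def IsPolicy {S A : Type*} [Fintype A] (π : S → A → ℝ) : Prop :=
  ∀ s, π s ∈ simplex A

/-- `KL q p` is the Bregman (KL) divergence `D_q^p = ∑_a p a * log (p a / q a)`. -/
def KL {A : Type*} [Fintype A] (q p : A → ℝ) : ℝ :=
  ∑ a, p a * Real.log (p a / q a)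

/-- The state transition matrix `P^π` induced by policy `π`. -/
def Pmat {S A : Type*} [Fintype A] (P : S → A → S → ℝ) (π : S → A → ℝ) :
    Matrix S S ℝ :=
  Matrix.of fun s s' => ∑ a, π s a * P s a s'

/-- `V` satisfies the Bellman equation for policy `π`, cost `c`, regularizer `h`,
and discount factor `γ`. -/
def IsValue {S A : Type*} [Fintype S] [Fintype A] (P : S → A → S → ℝ)
    (c : S → A → ℝ) (h : S → (A → ℝ) → ℝ) (γ : ℝ) (π : S → A → ℝ)
    (V : S → ℝ) : Prop :=
  ∀ s, V s = (∑ a, π s a * c s a) + h s (π s)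
    + γ * ∑ s', (∑ a, π s a * P s a s') * V s'

/-- The action-value function `Q^π` determined by a state-value function `V`. -/
def Qfun {S A : Type*} [Fintype S] (P : S → A → S → ℝ) (c : S → A → ℝ)
    (h : S → (A → ℝ) → ℝ) (γ : ℝ) (π : S → A → ℝ) (V : S → ℝ) :
    S → A → ℝ :=
  fun s a => c s a + h s (π s) + γ * ∑ s', P s a s' * V s'

/-- The discounted state-visitation distribution `d_s^π(s')`. -/
def dvisit {S A : Type*} [Fintype S] [Fintype A] [DecidableEq S]
    (P : S → A → S → ℝ) (γ : ℝ) (π : S → A → ℝ) (s s' : S) : ℝ :=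
  (1 - γ) * ∑' t : ℕ, γ ^ t * ((Pmat P π) ^ t) s s'

/-- `next` minimizes `p ↦ η * (⟨G, p⟩ + hreg p) + KL base p` over the simplex. -/
def IsProxStep {A : Type*} [Fintype A] (G : A → ℝ) (hreg : (A → ℝ) → ℝ)
    (η : ℝ) (base next : A → ℝ) : Prop :=
  next ∈ simplex A ∧ ∀ p ∈ simplex A,
    η * ((∑ a, G a * next a) + hreg next) + KL base next ≤
      η * ((∑ a, G a * p a) + hreg p) + KL base p

/-- `h` is convex with modulus `μ` relative to KL, with subgradients `h'`. -/
def ConvexReg {S A : Type*} [Fintype A] (h : S → (A → ℝ) → ℝ)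
    (h' : S → (A → ℝ) → A → ℝ) (μ : ℝ) : Prop :=
  ∀ s : S, ∀ p ∈ simplex A, ∀ q ∈ simplex A,
    μ * KL q p ≤ h s p - (h s q + ∑ a, h' s q a * (p a - q a))

lemma KL_eq {A : Type*} [Fintype A] (q p : A → ℝ) (hq : ∀ a, 0 < q a) :
    KL q p = ∑ a, p a * Real.log (p a) - ∑ a, p a * Real.log (q a) := by
  unfold KL
  rw [← Finset.sum_sub_distrib]
  refine Finset.sum_congr rfl fun a _ => ?_
  by_cases hp : p a = 0
  · simp [hp]
  · rw [Real.log_div hp (hq a).ne']; ring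

lemma KL_self {A : Type*} [Fintype A] (q : A → ℝ) (hq : ∀ a, 0 < q a) : KL q q = 0 := by
  rw [KL_eq q q hq]; ring

lemma KL_nonneg {A : Type*} [Fintype A] (q p : A → ℝ) (hq : ∀ a, 0 < q a)
    (hq1 : q ∈ simplex A) (hp : p ∈ simplex A) : 0 ≤ KL q p := by
  have : ∑ a, (p a - q a) ≤ KL q p := by
    unfold KL
    refine Finset.sum_le_sum fun a _ => ?_
    rcases (hp.1 a).eq_or_lt with h0 | h0
    · rw [← h0]; simp [(hq a).le]
    · have h1 := Real.log_le_sub_one_of_pos (div_pos (hq a) h0)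
      have h2 : Real.log (p a / q a) = - Real.log (q a / p a) := by
        rw [← Real.log_inv, inv_div]
      rw [h2]
      have h3 : p a * Real.log (q a / p a) ≤ p a * (q a / p a - 1) :=
        mul_le_mul_of_nonneg_left h1 h0.le
      have h4 : p a * (q a / p a - 1) = q a - p a := by field_simp
      linarith
  rw [Finset.sum_sub_distrib, hp.2, hq1.2] at this
  linarith

lemma KL_le_chi {A : Type*} [Fintype A] (q x : A → ℝ) (hq : ∀ a, 0 < q a)
    (hq1 : q ∈ simplex A) (hx : x ∈ simplex A) : KL q x ≤ ∑ a, (x a - q a) ^ 2 / q a := by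
  have h1 : KL q x ≤ ∑ a, ((x a - q a) ^ 2 / q a + (x a - q a)) := by
    unfold KL
    refine Finset.sum_le_sum fun a _ => ?_
    have hqa := hq a
    rcases (hx.1 a).eq_or_lt with h0 | h0
    · rw [← h0]
      have : (0 - q a) ^ 2 / q a + (0 - q a) = 0 := by field_simp; ring
      rw [this]; simp
    · have h1 := Real.log_le_sub_one_of_pos (div_pos h0 hqa)
      have h3 := mul_le_mul_of_nonneg_left h1 h0.le
      have h4 : x a * (x a / q a - 1) = (x a - q a) ^ 2 / q a + (x a - q a) := by
        field_simp; ring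
      linarith
  rw [Finset.sum_add_distrib, Finset.sum_sub_distrib, hx.2, hq1.2] at h1
  linarith

lemma KL_unif_le {A : Type*} [Fintype A] [Nonempty A] (q p : A → ℝ)
    (hq : ∀ a, q a = 1 / (Fintype.card A : ℝ)) (hp : p ∈ simplex A) :
    KL q p ≤ Real.log (Fintype.card A) := by
  have hc : (0 : ℝ) < Fintype.card A := by exact_mod_cast Fintype.card_pos
  have hq0 : ∀ a, 0 < q a := fun a => by rw [hq a]; positivity
  rw [KL_eq q p hq0]
  have h1 : ∑ a, p a * Real.log (p a) ≤ 0 := by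
    refine Finset.sum_nonpos fun a _ => ?_
    have : p a ≤ 1 := by
      rw [← hp.2]
      exact Finset.single_le_sum (f := p) (fun b _ => hp.1 b) (Finset.mem_univ a)
    exact mul_nonpos_of_nonneg_of_nonpos (hp.1 a) (Real.log_nonpos (hp.1 a) this)
  have h2 : ∑ a, p a * Real.log (q a) = - Real.log (Fintype.card A) := by
    simp_rw [hq, one_div, Real.log_inv]
    rw [← Finset.sum_mul, hp.2]; ring
  linarith

lemma prox3 {A : Type*} [Fintype A] (G : A → ℝ) (g : (A → ℝ) → ℝ) (g' : (A → ℝ) → A → ℝ)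
    (hg : ∀ p ∈ simplex A, ∀ q ∈ simplex A, g q + ∑ a, g' q a * (p a - q a) ≤ g p)
    (η τ : ℝ) (hη : 0 ≤ η) (hτ : 0 ≤ τ) (u base next p : A → ℝ)
    (hu : ∀ a, 0 < u a) (hb : ∀ a, 0 < base a) (hn : ∀ a, 0 < next a)
    (hs : IsProxStep G (fun p => g p + τ * KL u p) η base next) (hp : p ∈ simplex A) :
    η * ((∑ a, G a * next a) + (g next + τ * KL u next)) + KL base next
      + (1 + η * τ) * KL next p ≤
      η * ((∑ a, G a * p a) + (g p + τ * KL u p)) + KL base p := by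
  obtain ⟨hns, hmin⟩ := hs
  set w : A → ℝ := fun a => η * G a - η * τ * Real.log (u a) - Real.log (base a)
    + (1 + η * τ) * Real.log (next a) with hw
  have hF : ∀ x : A → ℝ, η * ((∑ a, G a * x a) + (g x + τ * KL u x)) + KL base x
      = (∑ a, x a * w a) + η * g x + (1 + η * τ) * KL next x := by
    intro x
    rw [KL_eq u x hu, KL_eq base x hb, KL_eq next x hn]
    have : ∑ a, x a * w a = η * (∑ a, G a * x a) - η * τ * (∑ a, x a * Real.log (u a))
        - (∑ a, x a * Real.log (base a)) + (1 + η * τ) * (∑ a, x a * Real.log (next a)) := by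
      simp only [Finset.mul_sum, ← Finset.sum_sub_distrib, ← Finset.sum_add_distrib]
      refine Finset.sum_congr rfl fun a _ => ?_
      simp only [hw]; ring
    rw [this]; ring
  set M := 1 + η * τ with hM
  have hM0 : 0 ≤ M := by positivity
  set C := ∑ a, (p a - next a) ^ 2 / next a with hC
  have hC0 : 0 ≤ C := Finset.sum_nonneg fun a _ => div_nonneg (sq_nonneg _) (hn a).le
  set B := ((∑ a, p a * w a) + η * g p) - ((∑ a, next a * w a) + η * g next) with hB
  have key : ∀ t : ℝ, 0 < t → t ≤ 1 → 0 ≤ B + t * (M * C) := by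
    intro t ht0 ht1
    set x : A → ℝ := fun a => (1 - t) * next a + t * p a with hx
    have hxs : x ∈ simplex A := by
      refine ⟨fun a => ?_, ?_⟩
      · have := hns.1 a
        have := hp.1 a
        have : 0 ≤ 1 - t := by linarith
        simp only [hx]; positivity
      · simp only [hx, Finset.sum_add_distrib, ← Finset.mul_sum, hns.2, hp.2]; ring
    have h1 := hmin x hxs
    simp only [hF] at h1
    rw [KL_self next hn] at h1
    have hl : ∑ a, x a * w a = (1 - t) * (∑ a, next a * w a) + t * (∑ a, p a * w a) := by
      simp only [Finset.mul_sum, ← Finset.sum_add_distrib]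
      refine Finset.sum_congr rfl fun a _ => ?_
      simp only [hx]; ring
    have hgx : g x ≤ (1 - t) * g next + t * g p := by
      have e1 := hg p hp x hxs
      have e2 := hg next hns x hxs
      have e3 : (1 - t) * (∑ a, g' x a * (next a - x a)) + t * (∑ a, g' x a * (p a - x a)) = 0 := by
        simp only [Finset.mul_sum, ← Finset.sum_add_distrib]
        refine Finset.sum_eq_zero fun a _ => ?_
        simp only [hx]; ring
      have e4 := mul_le_mul_of_nonneg_left e1 ht0.le
      have e5 := mul_le_mul_of_nonneg_left e2 (sub_nonneg.2 ht1)
      nlinarith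
    have hk : KL next x ≤ t ^ 2 * C := by
      refine (KL_le_chi next x hn hns hxs).trans (le_of_eq ?_)
      rw [hC, Finset.mul_sum]
      refine Finset.sum_congr rfl fun a _ => ?_
      simp only [hx]; ring
    have e1 := mul_le_mul_of_nonneg_left hgx hη
    have e2 := mul_le_mul_of_nonneg_left hk hM0
    have : 0 ≤ t * (B + t * (M * C)) := by
      rw [hl] at h1
      rw [hB]
      nlinarith
    exact nonneg_of_mul_nonneg_right this ht0
  have hBn : 0 ≤ B := by
    by_contra hneg
    push Not at hneg
    have hMC : 0 ≤ M * C := mul_nonneg hM0 hC0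
    have hd : 0 < 1 + M * C - B := by linarith
    have h1 := key (-B / (1 + M * C - B)) (div_pos (by linarith) hd)
      (by rw [div_le_one hd]; linarith)
    have h2 : -B / (1 + M * C - B) * (M * C) < -B := by
      rw [div_mul_eq_mul_div, div_lt_iff₀ hd]
      nlinarith
    linarith
  rw [hF next, hF p, KL_self next hn]
  linarith

lemma max_principle {S : Type*} [Fintype S] [Nonempty S] (γ : ℝ) (hγ0 : 0 < γ) (hγ1 : γ < 1)
    (R : S → S → ℝ) (hR0 : ∀ s s', 0 ≤ R s s') (hR1 : ∀ s, ∑ s', R s s' = 1)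
    (D : S → ℝ) (hD : ∀ s, D s ≤ γ * ∑ s', R s s' * D s') (s : S) : D s ≤ 0 := by
  obtain ⟨m, hm⟩ := Finite.exists_max D
  have h1 : ∑ s', R m s' * D s' ≤ D m := by
    calc ∑ s', R m s' * D s' ≤ ∑ s', R m s' * D m :=
          Finset.sum_le_sum fun s' _ => mul_le_mul_of_nonneg_left (hm s') (hR0 m s')
      _ = D m := by rw [← Finset.sum_mul, hR1, one_mul]
  have h2 := hD m
  have h3 := mul_le_mul_of_nonneg_left h1 hγ0.le
  have := hm s
  nlinarith

/-- linear convergence of APMD with halving perturbation: with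
`l = ⌈log_γ(1/4)⌉`, `τ_k = 2^{-(⌊k/l⌋+1)}` and `1 + η_k τ_k = 1/γ`, for every
`k`: `f(π_k) - f(π*) ≤ 2^{-⌊k/l⌋} [f(π_0) - f(π*) + 2 log|A|/(1-γ)]`. -/
theorem apmd_linear_convergence_halving {S A : Type*} [Fintype S] [Fintype A]
    [Nonempty S] [Nonempty A]
    (P : S → A → S → ℝ) (hP0 : ∀ s a s', 0 ≤ P s a s')
    (hP1 : ∀ s a, ∑ s', P s a s' = 1)
    (c : S → A → ℝ) (γ : ℝ) (hγ0 : 0 < γ) (hγ1 : γ < 1)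
    (h : S → (A → ℝ) → ℝ) (h' : S → (A → ℝ) → A → ℝ)
    (hconv : ConvexReg h h' 0)
    (l : ℕ) (hl : (l : ℤ) = Int.ceil (Real.logb γ (1/4)))
    (π : ℕ → S → A → ℝ)
    (hunif : ∀ s a, π 0 s a = 1 / (Fintype.card A : ℝ))
    (hpol : ∀ k, IsPolicy (π k)) (hpos : ∀ k s a, 0 < π k s a)
    (V : ℝ → (S → A → ℝ) → S → ℝ)
    (hV : ∀ τ' : ℝ, 0 ≤ τ' → ∀ w : S → A → ℝ, IsPolicy w →
      IsValue P c (fun s p => h s p + τ' * KL (π 0 s) p) γ w (V τ' w))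
    (πstar : S → A → ℝ) (hπstar : IsPolicy πstar)
    (hopt : ∀ w : S → A → ℝ, IsPolicy w → ∀ s, V 0 πstar s ≤ V 0 w s)
    (ν : S → ℝ) (hν0 : ∀ s, 0 ≤ ν s) (hν1 : ∑ s, ν s = 1)
    (hstat : ∀ s', ∑ s, ν s * (∑ a, πstar s a * P s a s') = ν s')
    (τ η : ℕ → ℝ) (hτ : ∀ k, τ k = (1/2 : ℝ) ^ (k / l + 1))
    (hη : ∀ k, 1 + η k * τ k = 1 / γ)
    (hstep : ∀ k s, IsProxStep
      (Qfun P c (fun s' p => h s' p + τ k * KL (π 0 s') p) γ (π k)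
        (V (τ k) (π k)) s)
      (fun p => h s p + τ k * KL (π 0 s) p) (η k) (π k s) (π (k+1) s)) :
    ∀ k : ℕ,
      (∑ s, ν s * V 0 (π k) s) - (∑ s, ν s * V 0 πstar s)
        ≤ (1/2 : ℝ) ^ (k / l) * ((∑ s, ν s * V 0 (π 0) s)
            - (∑ s, ν s * V 0 πstar s)
          + 2 * Real.log (Fintype.card A) / (1 - γ)) := by
  have hγ' : 0 < 1 - γ := by linarith
  -- transition matrices
  set R : (S → A → ℝ) → S → S → ℝ := fun w s s' => ∑ a, w s a * P s a s' with hR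
  have hR0 : ∀ w, IsPolicy w → ∀ s s', 0 ≤ R w s s' := fun w hw s s' =>
    Finset.sum_nonneg fun a _ => mul_nonneg ((hw s).1 a) (hP0 s a s')
  have hR1 : ∀ w, IsPolicy w → ∀ s, ∑ s', R w s s' = 1 := by
    intro w hw s
    simp only [hR]
    rw [Finset.sum_comm]
    simp only [← Finset.mul_sum, hP1, mul_one]
    exact (hw s).2
  have hVe : ∀ t : ℝ, 0 ≤ t → ∀ w, IsPolicy w → ∀ s, V t w s
      = (∑ a, w s a * c s a) + (h s (w s) + t * KL (π 0 s) (w s))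
        + γ * ∑ s', R w s s' * V t w s' := fun t ht w hw s => hV t ht w hw s
  have hK0 : ∀ k s, ∀ p ∈ simplex A, 0 ≤ KL (π k s) p := fun k s p hp =>
    KL_nonneg _ _ (hpos k s) (hpol k s) hp
  -- monotonicity in the perturbation
  have hmono : ∀ t t' : ℝ, 0 ≤ t → t ≤ t' → ∀ w, IsPolicy w → ∀ s, V t w s ≤ V t' w s := by
    intro t t' ht htt w hw s
    have := max_principle γ hγ0 hγ1 (R w) (hR0 w hw) (hR1 w hw)
      (fun s => V t w s - V t' w s) (by
        intro s
        rw [hVe t ht w hw s, hVe t' (ht.trans htt) w hw s]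
        simp only [mul_sub, Finset.sum_sub_distrib]
        have := mul_le_mul_of_nonneg_right htt (hK0 0 s _ (hw s))
        linarith) s
    linarith
  have hτpos : ∀ k, 0 < τ k := fun k => by rw [hτ]; positivity
  have hητ : ∀ k, η k * τ k = (1 - γ) / γ := fun k => by
    have := hη k
    field_simp at this ⊢
    linarith
  have hηpos : ∀ k, 0 < η k := fun k => by
    have h1 : 0 < η k * τ k := by rw [hητ]; exact div_pos hγ' hγ0
    exact pos_of_mul_pos_left h1 (hτpos k).le
  -- Bellman operator
  set T : ℝ → (S → ℝ) → (S → A → ℝ) → S → ℝ := fun t v w s =>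
    (∑ a, w s a * c s a) + (h s (w s) + t * KL (π 0 s) (w s))
        + γ * ∑ s', R w s s' * v s' with hT
  have hQ : ∀ k, ∀ w, IsPolicy w → ∀ s,
      (∑ a, Qfun P c (fun s' p => h s' p + τ k * KL (π 0 s') p) γ (π k) (V (τ k) (π k)) s a
        * w s a) + (h s (w s) + τ k * KL (π 0 s) (w s))
      = T (τ k) (V (τ k) (π k)) w s + (h s (π k s) + τ k * KL (π 0 s) (π k s)) := by
    intro k w hw s
    simp only [hT, Qfun, hR]
    have e1 : ∑ s', (∑ a, w s a * P s a s') * V (τ k) (π k) s'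
        = ∑ a, w s a * ∑ s', P s a s' * V (τ k) (π k) s' := by
      simp only [Finset.sum_mul, Finset.mul_sum]
      rw [Finset.sum_comm]
      simp only [mul_assoc]
    rw [e1]
    simp only [add_mul, Finset.sum_add_distrib, ← Finset.mul_sum, (hw s).2]
    have e2 : ∑ a, c s a * w s a = ∑ a, w s a * c s a :=
      Finset.sum_congr rfl fun a _ => mul_comm _ _
    have e3 : ∑ a, γ * (∑ s', P s a s' * V (τ k) (π k) s') * w s a
        = γ * ∑ a, w s a * ∑ s', P s a s' * V (τ k) (π k) s' := by
      rw [Finset.mul_sum]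
      exact Finset.sum_congr rfl fun a _ => by ring
    rw [e2, e3]
    have e4 : ∑ a, h s (π k s) * w s a = h s (π k s) := by
      rw [← Finset.mul_sum, (hw s).2, mul_one]
    have e5 : ∑ a, τ k * KL (π 0 s) (π k s) * w s a = τ k * KL (π 0 s) (π k s) := by
      rw [← Finset.mul_sum, (hw s).2, mul_one]
    linarith
  have h3 : ∀ k, ∀ w, IsPolicy w → ∀ s,
      η k * T (τ k) (V (τ k) (π k)) (π (k+1)) s + KL (π k s) (π (k+1) s)
        + (1 / γ) * KL (π (k+1) s) (w s)
      ≤ η k * T (τ k) (V (τ k) (π k)) w s + KL (π k s) (w s) := by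
    intro k w hw s
    have e := prox3 _ (h s) (h' s) (fun p hp q hq => by
        have := hconv s p hp q hq
        linarith) (η k) (τ k) (hηpos k).le (hτpos k).le (π 0 s) (π k s) (π (k+1) s) (w s)
        (hpos 0 s) (hpos k s) (hpos (k+1) s) (hstep k s) (hw s)
    rw [hQ k (π (k+1)) (hpol _) s, hQ k w hw s, hη k] at e
    linarith
  have hTself : ∀ k s, T (τ k) (V (τ k) (π k)) (π k) s = V (τ k) (π k) s := fun k s =>
    (hVe (τ k) (hτpos k).le (π k) (hpol k) s).symm
  have hdec : ∀ k s, T (τ k) (V (τ k) (π k)) (π (k+1)) s ≤ V (τ k) (π k) s := by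
    intro k s
    have e := h3 k (π k) (hpol k) s
    rw [hTself, KL_self _ (hpos k s)] at e
    have e1 := hK0 k s _ (hpol (k+1) s)
    have e2 := mul_nonneg (one_div_pos.2 hγ0).le (hK0 (k+1) s _ (hpol k s))
    have e3 : η k * T (τ k) (V (τ k) (π k)) (π (k+1)) s ≤ η k * V (τ k) (π k) s := by linarith
    exact le_of_mul_le_mul_left e3 (hηpos k)
  have hVdiff : ∀ k s, V (τ k) (π (k+1)) s = T (τ k) (V (τ k) (π k)) (π (k+1)) s
      + γ * ∑ s', R (π (k+1)) s s' * (V (τ k) (π (k+1)) s' - V (τ k) (π k) s') := by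
    intro k s
    rw [hVe (τ k) (hτpos k).le (π (k+1)) (hpol _) s]
    simp only [hT, mul_sub, Finset.sum_sub_distrib]
    ring
  have hVdec : ∀ k s, V (τ k) (π (k+1)) s - V (τ k) (π k) s ≤ 0 := by
    intro k s
    refine max_principle γ hγ0 hγ1 (R (π (k+1))) (hR0 _ (hpol _)) (hR1 _ (hpol _))
      (fun s => V (τ k) (π (k+1)) s - V (τ k) (π k) s) (fun s => ?_) s
    have e1 := hVdiff k s
    have e2 := hdec k s
    linarith
  have hVT : ∀ k s, V (τ k) (π (k+1)) s ≤ T (τ k) (V (τ k) (π k)) (π (k+1)) s := by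
    intro k s
    have e1 := hVdiff k s
    have e2 : ∑ s', R (π (k+1)) s s' * (V (τ k) (π (k+1)) s' - V (τ k) (π k) s') ≤ 0 :=
      Finset.sum_nonpos fun s' _ =>
        mul_nonpos_of_nonneg_of_nonpos (hR0 _ (hpol _) s s') (hVdec k s')
    have e3 := mul_nonpos_of_nonneg_of_nonpos hγ0.le e2
    linarith
  -- averaged quantities
  set f : ℝ → (S → A → ℝ) → ℝ := fun t w => ∑ s, ν s * V t w s with hf
  set D : ℕ → ℝ := fun k => ∑ s, ν s * KL (π k s) (πstar s) with hD
  have hDnn : ∀ k, 0 ≤ D k := fun k =>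
    Finset.sum_nonneg fun s _ => mul_nonneg (hν0 s) (hK0 k s _ (hπstar s))
  have hDle : D 0 ≤ Real.log (Fintype.card A) := by
    calc D 0 ≤ ∑ s, ν s * Real.log (Fintype.card A) :=
          Finset.sum_le_sum fun s _ => mul_le_mul_of_nonneg_left
            (KL_unif_le _ _ (hunif s) (hπstar s)) (hν0 s)
      _ = _ := by rw [← Finset.sum_mul, hν1, one_mul]
  have hstatv : ∀ v : S → ℝ, ∑ s, ν s * ∑ s', R πstar s s' * v s' = ∑ s, ν s * v s := by
    intro v
    simp only [Finset.mul_sum]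
    rw [Finset.sum_comm]
    refine Finset.sum_congr rfl fun s' _ => ?_
    rw [← hstat s', Finset.sum_mul]
    exact Finset.sum_congr rfl fun s _ => by simp only [hR]; ring
  set g0 : ℝ := ∑ s, ν s * ((∑ a, πstar s a * c s a) + h s (πstar s)) with hg0
  have hTstar : ∀ t v, ∑ s, ν s * T t v πstar s = g0 + t * D 0 + γ * ∑ s, ν s * v s := by
    intro t v
    rw [← hstatv v]
    simp only [hg0, hD, hT, Finset.mul_sum, ← Finset.sum_add_distrib]
    refine Finset.sum_congr rfl fun s _ => ?_
    simp only [mul_add, Finset.mul_sum]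
    have : ∑ i, ν s * (γ * (R πstar s i * v i)) = ∑ i, γ * (ν s * (R πstar s i * v i)) :=
      Finset.sum_congr rfl fun i _ => by ring
    rw [this]
    ring
  have hfstar : ∀ t, 0 ≤ t → (1 - γ) * f t πstar = g0 + t * D 0 := by
    intro t ht
    have e1 := hTstar t (V t πstar)
    have e2 : ∑ s, ν s * T t (V t πstar) πstar s = f t πstar :=
      Finset.sum_congr rfl fun s _ => by rw [hVe t ht πstar hπstar s]
    rw [e2] at e1
    have e3 : f t πstar = ∑ s, ν s * V t πstar s := rfl
    rw [← e3] at e1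
    linarith
  have hfs : ∀ t, 0 ≤ t → f t πstar = f 0 πstar + t * (D 0 / (1 - γ)) := by
    intro t ht
    have e1 := hfstar t ht
    have e2 := hfstar 0 le_rfl
    have e3 : (1 - γ) * (f 0 πstar + t * (D 0 / (1 - γ))) = (1 - γ) * f 0 πstar + t * D 0 := by
      field_simp
    refine mul_left_cancel₀ hγ'.ne' ?_
    rw [e3]; linarith
  have hfmono : ∀ t t' : ℝ, 0 ≤ t → t ≤ t' → ∀ w, IsPolicy w → f t w ≤ f t' w :=
    fun t t' ht htt w hw => Finset.sum_le_sum fun s _ =>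
      mul_le_mul_of_nonneg_left (hmono t t' ht htt w hw s) (hν0 s)
  set Φ : ℝ → ℕ → ℝ := fun t k => f t (π k) - f t πstar + t * (D k / (1 - γ)) with hΦ
  -- one step contraction
  have hcontr : ∀ k, Φ (τ k) (k+1) ≤ γ * Φ (τ k) k := by
    intro k
    have e1 : η k * f (τ k) (π (k+1)) + (1 / γ) * D (k+1)
        ≤ η k * (g0 + τ k * D 0 + γ * f (τ k) (π k)) + D k := by
      rw [← hTstar (τ k) (V (τ k) (π k))]
      simp only [hf, hD, Finset.mul_sum, ← Finset.sum_add_distrib]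
      refine Finset.sum_le_sum fun s _ => ?_
      have a1 := h3 k πstar hπstar s
      have a2 := mul_le_mul_of_nonneg_left (hVT k s) (hηpos k).le
      have a3 := hK0 k s _ (hpol (k+1) s)
      have a4 : η k * V (τ k) (π (k+1)) s + (1 / γ) * KL (π (k+1) s) (πstar s)
        ≤ η k * T (τ k) (V (τ k) (π k)) πstar s + KL (π k s) (πstar s) := by linarith
      have a5 := mul_le_mul_of_nonneg_left a4 (hν0 s)
      linarith
    rw [← hfstar (τ k) (hτpos k).le] at e1
    have e2 : η k = (1 - γ) / γ / τ k := by
      rw [← hητ k]; field_simp [(hτpos k).ne']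
    have ht := hτpos k
    have e3 := mul_le_mul_of_nonneg_left e1 (a := τ k * γ / (1 - γ)) (by positivity)
    have e4 : ∀ x y, τ k * γ / (1 - γ) * (η k * x + y) = x + γ * (τ k * (y / (1 - γ))) := by
      intro x y
      rw [e2]; field_simp
    rw [e4, e4] at e3
    have e5 : γ * (τ k * (1 / γ * D (k + 1) / (1 - γ))) = τ k * (D (k+1) / (1 - γ)) := by
      field_simp
    rw [e5] at e3
    simp only [hΦ]
    linarith
  set L : ℝ := Real.log (Fintype.card A) / (1 - γ) with hL
  have hD0L : D 0 / (1 - γ) ≤ L := div_le_div_of_nonneg_right hDle hγ'.le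
  have hD0n : 0 ≤ D 0 / (1 - γ) := div_nonneg (hDnn 0) hγ'.le
  have hLn : 0 ≤ L := hD0n.trans hD0L
  have hδ : 0 ≤ f 0 (π 0) - f 0 πstar := by
    have : f 0 πstar ≤ f 0 (π 0) := Finset.sum_le_sum fun s _ =>
      mul_le_mul_of_nonneg_left (hopt (π 0) (hpol 0) s) (hν0 s)
    linarith
  set δ : ℝ := f 0 (π 0) - f 0 πstar with hδd
  -- the epoch length
  have hlog : 0 < Real.logb γ (1/4) :=
    Real.logb_pos_of_base_lt_one hγ0 hγ1 (by norm_num) (by norm_num)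
  have hl1 : 0 < l := by
    have : 0 < Int.ceil (Real.logb γ (1/4)) := Int.ceil_pos.2 hlog
    omega
  have hγl : γ ^ l ≤ 1/4 := by
    have e1 : Real.logb γ (1/4) ≤ (l : ℝ) := by
      have := Int.le_ceil (Real.logb γ (1/4))
      rw [← hl] at this
      exact_mod_cast this
    have e2 := Real.rpow_le_rpow_of_exponent_ge hγ0 hγ1.le e1
    rw [Real.rpow_natCast, Real.rpow_logb hγ0 hγ1.ne (by norm_num)] at e2
    exact e2
  have hinit : ∀ t, 0 ≤ t → Φ t 0 ≤ δ := by
    intro t ht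
    have e1 : f t (π 0) ≤ f 0 (π 0) := by
      refine Finset.sum_le_sum fun s _ => mul_le_mul_of_nonneg_left ?_ (hν0 s)
      have := max_principle γ hγ0 hγ1 (R (π 0)) (hR0 _ (hpol 0)) (hR1 _ (hpol 0))
        (fun s => V t (π 0) s - V 0 (π 0) s) (by
          intro s
          rw [hVe t ht _ (hpol 0) s, hVe 0 le_rfl _ (hpol 0) s, KL_self _ (hpos 0 s)]
          simp only [mul_sub, Finset.sum_sub_distrib]
          linarith) s
      linarith
    have e2 := hfs t ht
    simp only [hΦ]
    linarith
  have main : ∀ k, Φ (τ k) k ≤ γ ^ (k % l) * ((1/2 : ℝ) ^ (k / l) * (δ + L)) := by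
    intro k
    induction k with
    | zero =>
      have := hinit (τ 0) (hτpos 0).le
      simp only [Nat.zero_mod, Nat.zero_div, pow_zero, one_mul]
      linarith
    | succ k ih =>
      have e1 := (hcontr k).trans (mul_le_mul_of_nonneg_left ih hγ0.le)
      by_cases hk : k % l + 1 < l
      · have hdm := Nat.div_add_mod k l
        have e : k + 1 = (k % l + 1) + l * (k / l) := by omega
        have q1 : (k + 1) / l = k / l := by
          rw [e, Nat.add_mul_div_left _ _ hl1, Nat.div_eq_of_lt hk, zero_add]
        have q2 : (k + 1) % l = k % l + 1 := by
          rw [e, Nat.add_mul_mod_self_left, Nat.mod_eq_of_lt hk]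
        have q3 : τ (k+1) = τ k := by rw [hτ, hτ, q1]
        rw [q1, q2, q3, pow_succ]
        linarith
      · have hlt := Nat.mod_lt k hl1
        have hkl : k % l + 1 = l := by omega
        have hdm := Nat.div_add_mod k l
        have e : k + 1 = 0 + l * (k / l + 1) := by rw [mul_add]; omega
        have q1 : (k + 1) / l = k / l + 1 := by
          rw [e, Nat.add_mul_div_left _ _ hl1, Nat.zero_div, zero_add]
        have q2 : (k + 1) % l = 0 := by
          rw [e, Nat.add_mul_mod_self_left, Nat.zero_mod]
        set u : ℝ := (1/2 : ℝ) ^ (k / l) with hu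
        have hu0 : 0 < u := by positivity
        have q3 : τ k = u / 2 := by rw [hτ, pow_succ]; ring
        have q4 : τ (k+1) = u / 4 := by rw [hτ, q1, pow_succ, pow_succ]; ring
        rw [q1, q2, pow_zero, one_mul, pow_succ, ← hu]
        have e2 : Φ (τ k) (k+1) ≤ 1/4 * (u * (δ + L)) := by
          have a1 : γ * (γ ^ (k % l) * (u * (δ + L))) = γ ^ l * (u * (δ + L)) := by
            conv_rhs => rw [← hkl, pow_succ]
            ring
          rw [a1] at e1
          exact e1.trans (mul_le_mul_of_nonneg_right hγl (by positivity))
        have e3 : Φ (τ (k+1)) (k+1) ≤ Φ (τ k) (k+1) + u / 4 * L := by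
          have hle : τ (k+1) ≤ τ k := by rw [q3, q4]; linarith
          have b1 := hfmono _ _ (hτpos (k+1)).le hle _ (hpol (k+1))
          have b2 := hfs _ (hτpos (k+1)).le
          have b3 := hfs _ (hτpos k).le
          have b4 : τ (k+1) * (D (k+1) / (1 - γ)) ≤ τ k * (D (k+1) / (1 - γ)) :=
            mul_le_mul_of_nonneg_right hle (div_nonneg (hDnn _) hγ'.le)
          have b5 : u / 4 * (D 0 / (1 - γ)) ≤ u / 4 * L :=
            mul_le_mul_of_nonneg_left hD0L (by positivity)
          have b6 : τ k * (D 0 / (1 - γ)) = τ (k+1) * (D 0 / (1 - γ))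
              + u / 4 * (D 0 / (1 - γ)) := by rw [q3, q4]; ring
          simp only [hΦ]
          linarith
        have : 0 ≤ u * δ := by positivity
        linarith
  intro k
  have m := main k
  have hu0 : 0 < (1/2 : ℝ) ^ (k / l) := by positivity
  have q3 : τ k = (1/2 : ℝ) ^ (k / l) / 2 := by rw [hτ, pow_succ]; ring
  set u : ℝ := (1/2 : ℝ) ^ (k / l) with hu
  have m2 : Φ (τ k) k ≤ u * (δ + L) :=
    m.trans (mul_le_of_le_one_left (by positivity) (pow_le_one₀ hγ0.le hγ1.le))
  have b1 := hfmono 0 _ le_rfl (hτpos k).le _ (hpol k)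
  have b3 := hfs _ (hτpos k).le
  have b4 : 0 ≤ τ k * (D k / (1 - γ)) :=
    mul_nonneg (hτpos k).le (div_nonneg (hDnn _) hγ'.le)
  have b5 : τ k * (D 0 / (1 - γ)) ≤ u / 2 * L := by
    rw [q3]; exact mul_le_mul_of_nonneg_left hD0L (by positivity)
  have b6 : 0 ≤ u * L := by positivity
  have goal' : f 0 (π k) - f 0 πstar ≤ u * (δ + 2 * L) := by
    simp only [hΦ] at m2
    linarith
  have e9 : 2 * Real.log (Fintype.card A) / (1 - γ) = 2 * L := by rw [hL]; ring
  rw [e9]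
  exact goal'

end RL
end
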